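/- Let f(t) = 1/cosh²(t). For every k ∈ ℕ and every t ∈ ℝ, the (2k)-th iterated derivative satisfies |f^{(2k)}(t)| ≤ |f^{(2k)}(0)|; that is, every even-order derivative of sech² attains its global extreme value at t = 0. -/

import Mathlib

noncomputable def sW (n : ℤ) (t : ℝ) : ℂ := (1 / 2 + t * (Complex.I / Real.pi)) + n

noncomputable def sG (m : ℕ) (t : ℝ) : ℂ := ∑' n : ℤ, (sW n t ^ (m + 2))⁻¹

lemma sW_re (n : ℤ) (t : ℝ) : (sW n t).re = 1 / 2 + n := by
  have : sW n t = ((1 / 2 + n : ℝ) : ℂ) + ((t / Real.pi : ℝ) : ℂ) * Complex.I := by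
    unfold sW; push_cast; ring
  rw [this]; simp

lemma sHalf_ne (n : ℤ) : (1 / 2 + n : ℝ) ≠ 0 := by
  intro h
  have h2 : (1 + 2 * n : ℝ) = 0 := by linarith
  have h3 : (1 + 2 * n : ℤ) = 0 := by exact_mod_cast h2
  omega

lemma sW_ne (n : ℤ) (t : ℝ) : sW n t ≠ 0 := by
  intro h
  have := sW_re n t
  rw [h] at this
  exact sHalf_ne n (by simpa using this.symm)

lemma sW_zero (n : ℤ) : sW n 0 = ((1 / 2 + n : ℝ) : ℂ) := by
  unfold sW; push_cast; ring

lemma sW_norm_le (n : ℤ) (t : ℝ) : ‖sW n 0‖ ≤ ‖sW n t‖ := by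
  rw [sW_zero, Complex.norm_real, Real.norm_eq_abs, ← sW_re n t]
  exact Complex.abs_re_le_norm _

lemma sW_term_le (m : ℕ) (n : ℤ) (t : ℝ) :
    ‖(sW n t ^ m)⁻¹‖ ≤ ‖(sW n 0 ^ m)⁻¹‖ := by
  rw [norm_inv, norm_inv, norm_pow, norm_pow]
  have := norm_pos_iff.mpr (sW_ne n 0)
  have := sW_norm_le n t
  gcongr

lemma sSummable0 (m : ℕ) : Summable fun n : ℤ => ‖(sW n 0 ^ (m + 2))⁻¹‖ := by
  have h := EisensteinSeries.linear_right_summable (1 / 2 : ℂ) 1 (k := (m + 2 : ℕ)) (by push_cast; omega)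
  refine h.norm.congr fun n => ?_
  rw [sW_zero]
  simp only [zpow_natCast]
  push_cast
  ring_nf

lemma sSummable (m : ℕ) (t : ℝ) : Summable fun n : ℤ => (sW n t ^ (m + 2))⁻¹ :=
  Summable.of_norm_bounded (sSummable0 m) fun n => sW_term_le _ n t

lemma sW_hasDeriv (n : ℤ) (t : ℝ) : HasDerivAt (sW n) (Complex.I / Real.pi) t := by
  have h : HasDerivAt (fun t : ℝ => (t : ℂ)) 1 t := Complex.ofRealCLM.hasDerivAt
  have := ((h.mul_const (Complex.I / Real.pi)).const_add (1 / 2 : ℂ)).add_const (n : ℂ)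
  rw [one_mul] at this
  exact this

lemma sTerm_hasDeriv (m : ℕ) (n : ℤ) (t : ℝ) :
    HasDerivAt (fun t => (sW n t ^ (m + 1))⁻¹)
      (-(m + 1 : ℂ) * (Complex.I / Real.pi) * (sW n t ^ (m + 2))⁻¹) t := by
  have hne := sW_ne n t
  convert! ((sW_hasDeriv n t).pow (m + 1)).inv (pow_ne_zero _ hne) using 1
  simp only [Pi.pow_apply, Nat.add_sub_cancel]
  have : (Real.pi : ℂ) ≠ 0 := by exact_mod_cast Real.pi_ne_zero
  push_cast
  field_simp
  ring

lemma sG_hasDeriv (m : ℕ) (t : ℝ) :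
    HasDerivAt (sG m) (-(m + 2 : ℂ) * (Complex.I / Real.pi) * sG (m + 1) t) t := by
  unfold sG
  rw [← tsum_mul_left]
  refine hasDerivAt_tsum (y₀ := (0 : ℝ)) (𝕜 := ℝ) (F := ℂ)
    (g := fun (n : ℤ) (t : ℝ) => (sW n t ^ (m + 2))⁻¹)
    (g' := fun (n : ℤ) (t : ℝ) =>
      -(m + 2 : ℂ) * (Complex.I / Real.pi) * (sW n t ^ (m + 1 + 2))⁻¹)
    (u := fun n : ℤ => ‖(-(m + 2 : ℂ) * (Complex.I / Real.pi))‖ * ‖(sW n 0 ^ (m + 1 + 2))⁻¹‖)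
    ((sSummable0 (m + 1)).mul_left _) (fun n y => ?_) (fun n y => ?_) (sSummable m 0) t
  · have h := sTerm_hasDeriv (m + 1) n y
    have e : -(((m + 1 : ℕ) : ℂ) + 1) = -(m + 2 : ℂ) := by push_cast; ring
    rw [e] at h
    exact h
  · rw [norm_mul]
    exact mul_le_mul_of_nonneg_left (sW_term_le _ n y) (norm_nonneg _)

lemma sCot (t : ℝ) : Real.pi * Complex.cot (Real.pi * sW 0 t)
    = -(Real.pi * Complex.I) * ((Real.tanh t : ℝ) : ℂ) := by
  have : (Real.pi : ℂ) ≠ 0 := by exact_mod_cast Real.pi_ne_zero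
  have h : Real.pi * sW 0 t = t * Complex.I + Real.pi / 2 := by
    unfold sW; field_simp; push_cast; ring
  rw [h, Complex.cot, Complex.cos_add_pi_div_two, Complex.sin_add_pi_div_two,
    Complex.sin_mul_I, Complex.cos_mul_I, Complex.ofReal_tanh, Complex.tanh_eq_sinh_div_cosh]
  ring

lemma sTanh (t : ℝ) : HasDerivAt Real.tanh (1 / Real.cosh t ^ 2) t := by
  have h := (Real.hasDerivAt_sinh t).div (Real.hasDerivAt_cosh t) (Real.cosh_pos t).ne'
  have e : Real.tanh = Real.sinh / Real.cosh := by
    ext x; simp [Real.tanh_eq_sinh_div_cosh]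
  rw [e]
  convert! h using 2
  have := Real.cosh_sq t
  nlinarith

lemma sSeries (t : ℝ) : Real.pi * Complex.cot (Real.pi * sW 0 t) = (sW 0 t ^ (0 + 1))⁻¹ +
    ∑' n : ℕ, ((sW (-((n : ℤ) + 1)) t ^ (0 + 1))⁻¹ + (sW ((n : ℤ) + 1) t ^ (0 + 1))⁻¹) := by
  have hz : sW 0 t ∈ Complex.integerComplement := by
    rintro ⟨n, hn⟩
    apply sW_ne (-n) t
    have : sW (-n) t = sW 0 t - n := by unfold sW; push_cast; ring
    rw [this, ← hn, sub_self]
  have h := cot_series_rep' hz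
  rw [sub_eq_iff_eq_add'] at h
  rw [h]
  simp only [zero_add, pow_one, one_div]
  congr 1
  refine tsum_congr fun n => ?_
  congr 2 <;> · unfold sW; push_cast; ring

lemma sPair (m : ℕ) (t : ℝ) :
    sG m t = (sW 0 t ^ (m + 2))⁻¹ +
    ∑' n : ℕ, ((sW (-((n : ℤ) + 1)) t ^ (m + 2))⁻¹ + (sW ((n : ℤ) + 1) t ^ (m + 2))⁻¹) := by
  have hs := sSummable m t
  unfold sG
  rw [tsum_int_eq_zero_add_tsum_pnat hs,
    tsum_pnat_eq_tsum_succ (f := fun n : ℕ => (sW (n : ℤ) t ^ (m + 2))⁻¹),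
    tsum_pnat_eq_tsum_succ (f := fun n : ℕ => (sW (-(n : ℤ)) t ^ (m + 2))⁻¹)]
  have inj1 : Function.Injective fun n : ℕ => (-((n : ℤ) + 1)) := fun a b h => by simpa using h
  have inj2 : Function.Injective fun n : ℕ => (((n : ℤ) + 1)) := fun a b h => by simpa using h
  have h1 := hs.comp_injective inj1
  have h2 := hs.comp_injective inj2
  have h3 := Summable.tsum_add h1 h2
  simp only [Function.comp_def] at h3
  rw [h3]
  push_cast
  ring

lemma sBase (t : ℝ) : ((1 / Real.cosh t ^ 2 : ℝ) : ℂ) = ((Real.pi : ℂ) ^ 2)⁻¹ * sG 0 t := by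
  have hpi : (Real.pi : ℂ) ≠ 0 := by exact_mod_cast Real.pi_ne_zero
  have h1 : HasDerivAt (fun t : ℝ => Real.pi * Complex.cot (Real.pi * sW 0 t))
      (-(Real.pi * Complex.I) * ((1 / Real.cosh t ^ 2 : ℝ) : ℂ)) t := by
    simp only [sCot]
    exact (sTanh t).ofReal_comp.const_mul _
  have inj1 : Function.Injective fun n : ℕ => (-((n : ℤ) + 1)) := fun a b h => by simpa using h
  have inj2 : Function.Injective fun n : ℕ => (((n : ℤ) + 1)) := fun a b h => by simpa using h
  have h2 : HasDerivAt (fun t : ℝ => Real.pi * Complex.cot (Real.pi * sW 0 t))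
      (-(Complex.I / Real.pi) * sG 0 t) t := by
    simp only [sSeries]
    rw [sPair, mul_add, ← tsum_mul_left]
    refine HasDerivAt.add ?_ ?_
    · simpa using sTerm_hasDeriv 0 0 t
    · refine hasDerivAt_tsum (y₀ := (0 : ℝ)) (𝕜 := ℝ) (F := ℂ)
        (g := fun (n : ℕ) (t : ℝ) =>
          (sW (-((n : ℤ) + 1)) t ^ (0 + 1))⁻¹ + (sW ((n : ℤ) + 1) t ^ (0 + 1))⁻¹)
        (g' := fun (n : ℕ) (t : ℝ) => -(Complex.I / Real.pi) *
          ((sW (-((n : ℤ) + 1)) t ^ (0 + 2))⁻¹ + (sW ((n : ℤ) + 1) t ^ (0 + 2))⁻¹))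
        (u := fun n : ℕ => ‖Complex.I / Real.pi‖ * (‖(sW (-((n : ℤ) + 1)) 0 ^ (0 + 2))⁻¹‖ +
          ‖(sW ((n : ℤ) + 1) 0 ^ (0 + 2))⁻¹‖)) ?_ (fun n y => ?_) (fun n y => ?_) ?_ t
      · exact (((sSummable0 0).comp_injective inj1).add
          ((sSummable0 0).comp_injective inj2)).mul_left _
      · convert! (sTerm_hasDeriv 0 (-((n : ℤ) + 1)) y).add (sTerm_hasDeriv 0 ((n : ℤ) + 1) y) using 1
        push_cast; ring
      · rw [norm_mul, norm_neg]
        refine mul_le_mul_of_nonneg_left ((norm_add_le _ _).trans ?_) (norm_nonneg _)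
        exact add_le_add (sW_term_le _ _ y) (sW_term_le _ _ y)
      · have hz : sW 0 0 ∈ Complex.integerComplement := by
          rintro ⟨n, hn⟩
          apply sW_ne (-n) 0
          have : sW (-n) 0 = sW 0 0 - n := by unfold sW; push_cast; ring
          rw [this, ← hn, sub_self]
        refine (summable_cotTerm hz).congr fun n => ?_
        simp only [cotTerm, zero_add, pow_one, one_div]
        congr 2 <;> · unfold sW; push_cast; ring
  have h := h1.unique h2
  have hI := Complex.I_ne_zero
  field_simp at h ⊢
  linear_combination -h

lemma sIter (m : ℕ) : iteratedDeriv m (fun t : ℝ => 1 / Real.cosh t ^ 2) = fun t =>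
    (((Real.pi : ℂ) ^ 2)⁻¹ * ((m + 1).factorial * (-(Complex.I / Real.pi)) ^ m) * sG m t).re := by
  induction m with
  | zero =>
    ext t
    have := congrArg Complex.re (sBase t)
    rw [Complex.ofReal_re] at this
    rw [iteratedDeriv_zero, this]
    norm_num
  | succ m ih =>
    rw [iteratedDeriv_succ, ih]
    ext t
    have h := (sG_hasDeriv m t).const_mul
      (((Real.pi : ℂ) ^ 2)⁻¹ * ((m + 1).factorial * (-(Complex.I / Real.pi)) ^ m))
    have h' := (Complex.reCLM.hasFDerivAt.comp_hasDerivAt t h)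
    refine (HasDerivAt.deriv h').trans ?_
    simp only [Complex.reCLM_apply]
    congr 1
    rw [Nat.factorial_succ (m + 1)]
    push_cast
    ring

theorem stmt_14 :
    ∀ (k : ℕ) (t : ℝ),
      |iteratedDeriv (2 * k) (fun t : ℝ => 1 / Real.cosh t ^ 2) t| ≤
        |iteratedDeriv (2 * k) (fun t : ℝ => 1 / Real.cosh t ^ 2) 0| := by
  intro k t
  rw [sIter]
  set C : ℂ := ((Real.pi : ℂ) ^ 2)⁻¹ * ((2 * k + 1).factorial * (-(Complex.I / Real.pi)) ^ (2 * k))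
    with hC
  set S : ℝ := ∑' n : ℤ, ‖(sW n 0 ^ (2 * k + 2))⁻¹‖ with hS
  have hS0 : 0 ≤ S := tsum_nonneg fun n => norm_nonneg _
  have hCr : ∃ c : ℝ, C = c := by
    refine ⟨(Real.pi ^ 2)⁻¹ * ((2 * k + 1).factorial * (-(Real.pi ^ 2)⁻¹) ^ k), ?_⟩
    rw [hC, pow_mul, neg_sq, div_pow, Complex.I_sq]
    push_cast
    ring
  have hG0 : sG (2 * k) 0 = S := by
    rw [hS, Complex.ofReal_tsum]
    refine tsum_congr fun n => ?_
    rw [sW_zero, norm_inv, norm_pow, Complex.norm_real, Real.norm_eq_abs,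
      show 2 * k + 2 = 2 * (k + 1) by ring, pow_mul |_|, sq_abs, ← pow_mul]
    push_cast
    rfl
  have hGt : ‖sG (2 * k) t‖ ≤ S :=
    tsum_of_norm_bounded (sSummable0 (2 * k)).hasSum fun n => sW_term_le _ n t
  obtain ⟨c, hc⟩ := hCr
  simp only [hG0, hc]
  rw [← Complex.ofReal_mul, Complex.ofReal_re, abs_mul, abs_of_nonneg hS0]
  refine (Complex.abs_re_le_norm _).trans ?_
  rw [norm_mul, Complex.norm_real, Real.norm_eq_abs]
  gcongr
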